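/- arXiv:gr-qc/0205012 — 7 statements merged into one kernel-verified Lean document; each statement's English description precedes it below -/
import Mathlib

section
/- Let ω be a constant invertible symmetric n×n real matrix with inverse entries ω^{kl}, U ⊆ ℝⁿ open, f: U → ℝⁿ of class C², and α: U → ℝ of class C¹, such that f is conformal with factor e^{2α}: Σ_{r,s} ω_{rs} ∂_i f^r ∂_j f^s = e^{2α} ω_{ij} on U for all i,j. Then the second derivatives of f satisfy, on U and for all i,j,k: ∂_i∂_j f^k = ∂_iα ∂_j f^k + ∂_jα ∂_i f^k − ω_{ij} Σ_{l,m} ω^{lm} ∂_lα ∂_m f^k. -/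
open Matrix

/-- Partial derivative `∂ᵢ f (x)` of a scalar function on `ℝⁿ`. -/
noncomputable def pd {n : ℕ} (f : (Fin n → ℝ) → ℝ) (i : Fin n) (x : Fin n → ℝ) : ℝ :=
  fderiv ℝ f x (Pi.single i 1)

/-- Pointwise algebra behind the prolongation: a family of vectors `H i j`, symmetric in `i, j`,
is determined by the first derivative of the relation `Jᵀ ω J = c ω`. -/
theorem eq_of_differentiated_conformal {n : ℕ} {ω J : Matrix (Fin n) (Fin n) ℝ}
    (hinv : IsUnit ω.det) (hsym : ω.IsSymm) {c : ℝ} (hc : c ≠ 0)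
    (hJ : ∀ i j, ∑ r, ∑ s, ω r s * J r i * J s j = c * ω i j)
    {H : Fin n → Fin n → Fin n → ℝ} (hH : ∀ i j, H i j = H j i) {a : Fin n → ℝ}
    (hd : ∀ m i j, ∑ r, ∑ s, (ω r s * H m i r * J s j + ω r s * J r i * H m j s)
      = 2 * a m * c * ω i j) (i j k : Fin n) :
    H i j k = a i * J k j + a j * J k i - ω i j * ∑ l, ∑ m, ω⁻¹ l m * a l * J k m := by
  have hJmat : Jᵀ * (ω * J) = c • ω := by
    ext i j
    simp only [mul_apply, transpose_apply, Matrix.smul_apply, smul_eq_mul, ← hJ, Finset.mul_sum]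
    exact Finset.sum_congr rfl fun r _ => Finset.sum_congr rfl fun s _ => by ring
  have hdet : (ω * J).det ≠ 0 := by
    intro h
    have h' := congrArg det hJmat
    rw [det_mul, h, mul_zero, det_smul] at h'
    exact mul_ne_zero (pow_ne_zero _ hc) hinv.ne_zero h'.symm
  have hsum : ∀ m i j, H m i ⬝ᵥ (ω * J).col j + H m j ⬝ᵥ (ω * J).col i = 2 * a m * c * ω i j := by
    intro m i j
    rw [← hd]
    simp only [Finset.sum_add_distrib, dotProduct, mul_apply, Finset.mul_sum, col_apply]
    congr 1
    · exact Finset.sum_congr rfl fun r _ => Finset.sum_congr rfl fun s _ => by ring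
    · rw [Finset.sum_comm]
      refine Finset.sum_congr rfl fun r _ => Finset.sum_congr rfl fun s _ => ?_
      rw [hsym.apply r s]
      ring
  have hG : ∀ m i j, H m i ⬝ᵥ (ω * J).col j
      = c * (a m * ω i j + a i * ω m j - a j * ω m i) := by
    intro m i j
    have h₁ := hsum m i j
    have h₂ := hsum i m j
    have h₃ := hsum j m i
    rw [hH i m] at h₂
    rw [hH j m, hH j i] at h₃
    linarith
  have hcol : ∀ i j, J.col i ⬝ᵥ (ω * J).col j = c * ω i j := fun i j =>
    congrFun (congrFun hJmat i) j
  have hcontr : ∀ j, (J *ᵥ (a ᵥ* ω⁻¹)) ⬝ᵥ (ω * J).col j = c * a j := by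
    intro j
    have h : (J *ᵥ (a ᵥ* ω⁻¹)) ᵥ* (ω * J) = c • a := by
      rw [← vecMul_transpose, vecMul_vecMul, vecMul_vecMul, hJmat,
        Matrix.mul_smul, nonsing_inv_mul ω hinv, vecMul_smul, vecMul_one]
    exact congrFun h j
  have hzero : H i j - (a i • J.col j + a j • J.col i - ω i j • (J *ᵥ (a ᵥ* ω⁻¹))) = 0 := by
    refine eq_zero_of_vecMul_eq_zero hdet (funext fun b => ?_)
    change _ ⬝ᵥ (ω * J).col b = 0
    simp only [sub_dotProduct, add_dotProduct, smul_dotProduct, hG, hcol, hcontr, smul_eq_mul]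
    ring
  have hk := congrFun (sub_eq_zero.mp hzero) k
  rw [hk]
  simp only [Pi.sub_apply, Pi.add_apply, Pi.smul_apply, smul_eq_mul, col_apply, mulVec, vecMul,
    dotProduct, Finset.mul_sum]
  rw [Finset.sum_comm]
  congr 1
  exact Finset.sum_congr rfl fun l _ => Finset.sum_congr rfl fun m _ => by ring

theorem ContDiffAt.differentiableAt_pd {n : ℕ} {g : (Fin n → ℝ) → ℝ} {x : Fin n → ℝ}
    (hg : ContDiffAt ℝ 2 g x) (i : Fin n) : DifferentiableAt ℝ (pd g i) x :=
  ((hg.fderiv_right (m := 1) (by norm_num)).differentiableAt (by norm_num)).clm_apply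
    (differentiableAt_const _)

theorem ContDiffAt.pd_pd_comm {n : ℕ} {g : (Fin n → ℝ) → ℝ} {x : Fin n → ℝ}
    (hg : ContDiffAt ℝ 2 g x) (i j : Fin n) : pd (pd g j) i x = pd (pd g i) j x := by
  have hd : DifferentiableAt ℝ (fderiv ℝ g) x :=
    (hg.fderiv_right (m := 1) (by norm_num)).differentiableAt (by norm_num)
  have h : ∀ i j, pd (pd g j) i x
      = fderiv ℝ (fderiv ℝ g) x (Pi.single i 1) (Pi.single j 1) := by
    intro i j
    change fderiv ℝ (fun y => fderiv ℝ g y (Pi.single j 1)) x _ = _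
    rw [fderiv_clm_apply hd (differentiableAt_const _)]
    simp
  rw [h, h]
  exact hg.isSymmSndFDerivAt (by simp) _ _

/-- prolongation of the conformal equations for a constant background metric:
`∂ᵢ∂ⱼ f^k = ∂ᵢα ∂ⱼ f^k + ∂ⱼα ∂ᵢ f^k − ω_{ij} Σ_{l,m} ω^{lm} ∂_lα ∂_m f^k`. -/
theorem stmt_4 (n : ℕ) (ω : Matrix (Fin n) (Fin n) ℝ)
    (hinv : IsUnit ω.det) (hsym : ω.IsSymm)
    (U : Set (Fin n → ℝ)) (hU : IsOpen U)
    (f : (Fin n → ℝ) → (Fin n → ℝ)) (α : (Fin n → ℝ) → ℝ)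
    (hf : ContDiffOn ℝ 2 f U) (hα : ContDiffOn ℝ 1 α U)
    (hconf : ∀ x ∈ U, ∀ i j : Fin n,
      ∑ r, ∑ s, ω r s * pd (fun y => f y r) i x * pd (fun y => f y s) j x
        = Real.exp (2 * α x) * ω i j) :
    ∀ x ∈ U, ∀ i j k : Fin n,
      pd (fun y => pd (fun z => f z k) j y) i x
        = pd α i x * pd (fun y => f y k) j x + pd α j x * pd (fun y => f y k) i x
          - ω i j * ∑ l, ∑ m, ω⁻¹ l m * pd α l x * pd (fun y => f y k) m x := by
  intro x hx i j k
  have hfx : ∀ r, ContDiffAt ℝ 2 (fun y => f y r) x := fun r =>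
    contDiffAt_pi.mp (hf.contDiffAt (hU.mem_nhds hx)) r
  have hαx : DifferentiableAt ℝ α x :=
    (hα.contDiffAt (hU.mem_nhds hx)).differentiableAt (by norm_num)
  refine eq_of_differentiated_conformal hinv hsym (Real.exp_ne_zero (2 * α x))
    (J := of fun r i => pd (fun y => f y r) i x)
    (H := fun i j r => pd (pd (fun y => f y r) j) i x) (a := fun i => pd α i x)
    (hconf x hx) (fun i j => funext fun r => (hfx r).pd_pd_comm i j) ?_ i j k
  intro m i j
  have hD : ∀ r i, HasFDerivAt (pd (fun y => f y r) i) (fderiv ℝ (pd (fun y => f y r) i) x) x :=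
    fun r i => ((hfx r).differentiableAt_pd i).hasFDerivAt
  have hL := HasFDerivAt.fun_sum (u := Finset.univ) fun r _ =>
    HasFDerivAt.fun_sum (u := Finset.univ) fun s _ => ((hD r i).const_mul (ω r s)).mul (hD s j)
  have hR := ((hαx.hasFDerivAt.const_mul 2).exp).mul_const (ω i j)
  have hEq := (hR.congr_of_eventuallyEq
    (Filter.eventually_of_mem (hU.mem_nhds hx) fun y hy => hconf y hy i j)).unique hL
  have hm := congrArg (fun L => L (Pi.single m 1)) hEq
  simp only [_root_.sum_apply, _root_.add_apply,
    _root_.smul_apply, smul_eq_mul] at hm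
  simp only [of_apply]
  calc _ = _ := Finset.sum_congr rfl fun r _ => Finset.sum_congr rfl fun s _ => ?_
    _ = _ := hm.symm
    _ = _ := ?_
  · simp only [pd]
    ring
  · simp only [pd]
    ring
end

section
/- Let n ≥ 3, let ω be a constant invertible symmetric n×n real matrix with inverse entries ω^{kl}, U ⊆ ℝⁿ open and connected, f: U → ℝⁿ of class C³ and α: U → ℝ of class C² such that f is conformal with factor e^{2α}: Σ_{r,s} ω_{rs} ∂_i f^r ∂_j f^s = e^{2α} ω_{ij} on U for all i,j. Then α satisfies the flat c-system: ∂_i∂_j α = ∂_iα ∂_jα − ½ (Σ_{k,l} ω^{kl} ∂_kα ∂_lα) ω_{ij} on U, for all i,j. -/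
open Matrix

section PartialDerivatives

variable {n : ℕ} {U : Set (Fin n → ℝ)}

lemma pd_congr_of_eqOn {g h : (Fin n → ℝ) → ℝ} (hU : IsOpen U) (hgh : ∀ y ∈ U, g y = h y)
    {x : Fin n → ℝ} (hx : x ∈ U) (i : Fin n) : pd g i x = pd h i x := by
  have hev : g =ᶠ[nhds x] h := Filter.eventuallyEq_of_mem (hU.mem_nhds hx) hgh
  rw [pd, pd, hev.fderiv_eq]

lemma ContDiffOn.pd {h : (Fin n → ℝ) → ℝ} {m k : WithTop ℕ∞} (hU : IsOpen U)
    (hh : ContDiffOn ℝ k h U) (hmk : m + 1 ≤ k) (i : Fin n) :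
    ContDiffOn ℝ m (fun y => pd h i y) U :=
  (hh.fderiv_of_isOpen hU hmk).clm_apply contDiffOn_const

lemma ContDiffOn.differentiableAt_of_isOpen {h : (Fin n → ℝ) → ℝ} {k : WithTop ℕ∞}
    (hU : IsOpen U) (hh : ContDiffOn ℝ k h U) (hk : k ≠ 0) {x : Fin n → ℝ} (hx : x ∈ U) :
    DifferentiableAt ℝ h x :=
  (hh.differentiableOn hk).differentiableAt (hU.mem_nhds hx)

lemma pd_comm {h : (Fin n → ℝ) → ℝ} (hU : IsOpen U) (hh : ContDiffOn ℝ 2 h U)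
    {x : Fin n → ℝ} (hx : x ∈ U) (i j : Fin n) :
    pd (fun y => pd h i y) j x = pd (fun y => pd h j y) i x := by
  have hd : DifferentiableAt ℝ (fderiv ℝ h) x :=
    ((hh.fderiv_of_isOpen (m := 1) hU (by norm_num)).differentiableOn
      one_ne_zero).differentiableAt (hU.mem_nhds hx)
  have key : ∀ a b : Fin n, pd (fun y => pd h a y) b x
      = fderiv ℝ (fderiv ℝ h) x (Pi.single b 1) (Pi.single a 1) := by
    intro a b
    simp only [pd]
    rw [fderiv_clm_apply hd (differentiableAt_const _)]
    simp
  have hs : IsSymmSndFDerivAt ℝ h x :=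
    (hh.contDiffAt (hU.mem_nhds hx)).isSymmSndFDerivAt (by simp)
  rw [key, key]
  exact hs _ _

lemma pd_bilin (ω : Matrix (Fin n) (Fin n) ℝ) {u v : Fin n → (Fin n → ℝ) → ℝ} {x : Fin n → ℝ}
    (hu : ∀ r, DifferentiableAt ℝ (u r) x) (hv : ∀ r, DifferentiableAt ℝ (v r) x) (i : Fin n) :
    pd (fun y => (fun r => u r y) ⬝ᵥ ω *ᵥ fun r => v r y) i x
      = (fun r => pd (u r) i x) ⬝ᵥ (ω *ᵥ fun r => v r x)
        + (fun r => u r x) ⬝ᵥ (ω *ᵥ fun r => pd (v r) i x) := by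
  have hd : HasFDerivAt (fun y => ∑ r, u r y * ∑ s, ω r s * v s y)
      (∑ r, (u r x • (∑ s, ω r s • fderiv ℝ (v s) x)
        + (∑ s, ω r s * v s x) • fderiv ℝ (u r) x)) x :=
    HasFDerivAt.fun_sum fun r _ => (hu r).hasFDerivAt.mul
      (HasFDerivAt.fun_sum fun s _ => (hv s).hasFDerivAt.const_mul (ω r s))
  simp only [pd, dotProduct, mulVec]
  rw [hd.fderiv]
  simp only [_root_.sum_apply, _root_.add_apply, _root_.smul_apply, smul_eq_mul,
    ← Finset.sum_add_distrib]
  exact Finset.sum_congr rfl fun r _ => by ring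

lemma pd_exp_two_mul {α β : (Fin n → ℝ) → ℝ} {x : Fin n → ℝ}
    (hα : DifferentiableAt ℝ α x) (hβ : DifferentiableAt ℝ β x) (i : Fin n) :
    pd (fun y => Real.exp (2 * α y) * β y) i x
      = Real.exp (2 * α x) * (2 * pd α i x * β x + pd β i x) := by
  have hd := ((hα.hasFDerivAt.const_mul 2).exp).fun_mul hβ.hasFDerivAt
  simp only [pd]
  rw [hd.fderiv]
  simp only [_root_.add_apply, _root_.smul_apply, smul_eq_mul]
  ring

end PartialDerivatives

section Algebra

variable {n : ℕ} {ω : Matrix (Fin n) (Fin n) ℝ}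

/-- In dimension at least three, a matrix whose Kulkarni–Nomizu product with a
nondegenerate symmetric form vanishes is zero. -/
lemma eq_zero_of_kulkarniNomizu_eq_zero (hn : 3 ≤ n) (hinv : IsUnit ω.det) (hsym : ω.IsSymm)
    {S : Matrix (Fin n) (Fin n) ℝ}
    (h : ∀ i j k l, S i l * ω j k - S k l * ω i j - S i j * ω l k + S k j * ω i l = 0) :
    S = 0 := by
  have hω : ω * ω⁻¹ = 1 := mul_nonsing_inv _ hinv
  have hsymm : ω⁻¹ᵀ = ω⁻¹ := by rw [transpose_nonsing_inv, hsym.eq]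
  have hs : ∀ i j, ω i j = ω j i := fun i j => hsym.apply j i
  have hs' : ∀ i j, ω⁻¹ i j = ω⁻¹ j i := fun i j => congrFun (congrFun hsymm j) i
  have hone : ∀ i j, ∑ k, ω i k * ω⁻¹ k j = (1 : Matrix (Fin n) (Fin n) ℝ) i j := by
    intro i j
    rw [← hω, mul_apply]
  set t : ℝ := ∑ j, ∑ k, ω⁻¹ j k * S k j with ht
  have htrace : ∑ j, ∑ k, ω⁻¹ j k * ω j k = n := by
    calc _ = ∑ j, ∑ k, ω j k * ω⁻¹ k j :=
          Finset.sum_congr rfl fun j _ => Finset.sum_congr rfl fun k _ => by rw [hs' j k, mul_comm]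
      _ = n := by simp [hone]
  have hcontr : ∀ i l, ((n : ℝ) - 2) * S i l = - t * ω i l := by
    intro i l
    have h0 : ∑ j, ∑ k, ω⁻¹ j k *
        (S i l * ω j k - S k l * ω i j - S i j * ω l k + S k j * ω i l) = 0 := by simp [h]
    have e1 : ∑ j, ∑ k, ω⁻¹ j k * (S i l * ω j k) = n * S i l := by
      rw [← htrace]
      simp only [Finset.sum_mul]
      exact Finset.sum_congr rfl fun j _ => Finset.sum_congr rfl fun k _ => by ring
    have e2 : ∑ j, ∑ k, ω⁻¹ j k * (S k l * ω i j) = S i l := by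
      rw [Finset.sum_comm]
      calc _ = ∑ k, (∑ j, ω i j * ω⁻¹ j k) * S k l := by
            simp only [Finset.sum_mul]
            exact Finset.sum_congr rfl fun j _ => Finset.sum_congr rfl fun k _ => by ring
        _ = S i l := by simp [hone, one_apply]
    have e3 : ∑ j, ∑ k, ω⁻¹ j k * (S i j * ω l k) = S i l := by
      calc _ = ∑ j, (∑ k, ω l k * ω⁻¹ k j) * S i j := by
            simp only [Finset.sum_mul]
            exact Finset.sum_congr rfl fun j _ => Finset.sum_congr rfl fun k _ => by
              rw [hs' j k]; ring
        _ = S i l := by simp [hone, one_apply]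
    have e4 : ∑ j, ∑ k, ω⁻¹ j k * (S k j * ω i l) = t * ω i l := by
      simp only [ht, Finset.sum_mul]
      exact Finset.sum_congr rfl fun j _ => Finset.sum_congr rfl fun k _ => by ring
    simp only [mul_add, mul_sub, Finset.sum_add_distrib, Finset.sum_sub_distrib] at h0
    rw [e1, e2, e3, e4] at h0
    linarith
  have hn' : (3 : ℝ) ≤ n := by exact_mod_cast hn
  have ht0 : t = 0 := by
    have h1 : ((n : ℝ) - 2) * t = - t * n := by
      conv_lhs => rw [ht]
      conv_rhs => rw [← htrace]
      simp only [Finset.mul_sum]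
      refine Finset.sum_congr rfl fun j _ => Finset.sum_congr rfl fun k _ => ?_
      rw [mul_left_comm, hcontr k j, hs k j]
      ring
    have h2 : (2 * (n : ℝ) - 2) * t = 0 := by linarith
    rcases mul_eq_zero.mp h2 with h3 | h3
    · linarith
    · exact h3
  ext i l
  have h1 := hcontr i l
  rw [ht0, neg_zero, zero_mul] at h1
  rcases mul_eq_zero.mp h1 with h3 | h3
  · linarith
  · exact h3

/-- If the columns of `J` have Gram matrix `e • ω` for the form `ω`, then the form is recovered
from the components along these columns. -/
lemma dotProduct_mulVec_of_conformal (hinv : IsUnit ω.det) {e : ℝ} (he : e ≠ 0)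
    {J : Matrix (Fin n) (Fin n) ℝ} (hJ : Jᵀ * ω * J = e • ω) (u v : Fin n → ℝ) :
    (u ᵥ* (ω * J)) ⬝ᵥ ω⁻¹ *ᵥ ((Jᵀ * ω) *ᵥ v) = e * (u ⬝ᵥ ω *ᵥ v) := by
  have hleft : (e⁻¹ • (ω⁻¹ * (Jᵀ * ω))) * J = 1 := by
    rw [smul_mul_assoc, Matrix.mul_assoc, hJ, mul_smul_comm, nonsing_inv_mul _ hinv, smul_smul,
      inv_mul_cancel₀ he, one_smul]
  have hright : J * (ω⁻¹ * (Jᵀ * ω)) = e • 1 := by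
    have h := mul_eq_one_comm.mp hleft
    rw [mul_smul_comm] at h
    rw [← h, smul_smul, mul_inv_cancel₀ he, one_smul]
  rw [← dotProduct_mulVec, mulVec_mulVec, mulVec_mulVec, Matrix.mul_assoc, Matrix.mul_assoc,
    hright]
  simp [smul_mulVec, dotProduct_smul]

/-- The conformal Christoffel symbol of the first kind, as a covector in its last index. -/
def christoffelVec (ω : Matrix (Fin n) (Fin n) ℝ) (a : Fin n → ℝ) (i j : Fin n) : Fin n → ℝ :=
  fun k => a i * ω j k + a j * ω i k - a k * ω i j

lemma row_dotProduct_inv_mulVec (hinv : IsUnit ω.det) (i : Fin n) (q : Fin n → ℝ) :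
    ω i ⬝ᵥ ω⁻¹ *ᵥ q = q i := by
  change (ω *ᵥ (ω⁻¹ *ᵥ q)) i = q i
  rw [mulVec_mulVec, mul_nonsing_inv _ hinv, one_mulVec]

lemma christoffelVec_dotProduct_inv_mulVec (hinv : IsUnit ω.det) (a q : Fin n → ℝ)
    (i j : Fin n) : christoffelVec ω a i j ⬝ᵥ ω⁻¹ *ᵥ q
      = a i * q j + a j * q i - ω i j * (a ⬝ᵥ ω⁻¹ *ᵥ q) := by
  have h : christoffelVec ω a i j = a i • ω j + a j • ω i - ω i j • a := by
    ext k
    simp [christoffelVec, mul_comm]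
  rw [h, sub_dotProduct, add_dotProduct, smul_dotProduct, smul_dotProduct, smul_dotProduct,
    row_dotProduct_inv_mulVec hinv, row_dotProduct_inv_mulVec hinv]
  simp

lemma christoffelVec_dotProduct_christoffelVec (hinv : IsUnit ω.det) (hsym : ω.IsSymm)
    (a : Fin n → ℝ) (i j k l : Fin n) :
    christoffelVec ω a i j ⬝ᵥ ω⁻¹ *ᵥ christoffelVec ω a k l
      = a i * christoffelVec ω a k l j + a j * christoffelVec ω a k l i
        - ω i j * (2 * a k * a l - ω k l * (a ⬝ᵥ ω⁻¹ *ᵥ a)) := by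
  have hsymm : ω⁻¹ᵀ = ω⁻¹ := by rw [transpose_nonsing_inv, hsym.eq]
  have hswap : a ⬝ᵥ ω⁻¹ *ᵥ christoffelVec ω a k l = christoffelVec ω a k l ⬝ᵥ ω⁻¹ *ᵥ a := by
    rw [dotProduct_mulVec, ← mulVec_transpose, hsymm, dotProduct_comm]
  rw [christoffelVec_dotProduct_inv_mulVec hinv, hswap,
    christoffelVec_dotProduct_inv_mulVec hinv]
  ring

end Algebra

section Conformal

variable {n : ℕ} {ω : Matrix (Fin n) (Fin n) ℝ} {U : Set (Fin n → ℝ)}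
  {f : (Fin n → ℝ) → (Fin n → ℝ)} {α : (Fin n → ℝ) → ℝ}

lemma dotProduct_mulVec_comm_of_isSymm (hsym : ω.IsSymm) (u v : Fin n → ℝ) :
    u ⬝ᵥ ω *ᵥ v = v ⬝ᵥ ω *ᵥ u := by
  rw [dotProduct_mulVec, ← mulVec_transpose, hsym.eq, dotProduct_comm]

/-- The second derivatives of a conformal map, in components along its first derivatives. -/
lemma snd_pd_dotProduct_of_conformal (hsym : ω.IsSymm) (hU : IsOpen U)
    (hf : ∀ r, ContDiffOn ℝ 2 (fun y => f y r) U) (hα : ContDiffOn ℝ 1 α U)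
    (hconf : ∀ x ∈ U, ∀ i j : Fin n,
      (fun r => pd (fun y => f y r) i x) ⬝ᵥ (ω *ᵥ fun r => pd (fun y => f y r) j x)
        = Real.exp (2 * α x) * ω i j) {x : Fin n → ℝ} (hx : x ∈ U) (i j k : Fin n) :
    (fun r => pd (fun z => pd (fun y => f y r) i z) j x)
        ⬝ᵥ (ω *ᵥ fun r => pd (fun y => f y r) k x)
      = Real.exp (2 * α x) * christoffelVec ω (fun m => pd α m x) i j k := by
  have hdf : ∀ i r, DifferentiableAt ℝ (fun z => pd (fun y => f y r) i z) x := fun i r =>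
    ((hf r).pd (m := 1) hU (by norm_num) i).differentiableAt_of_isOpen hU one_ne_zero hx
  have hda := hα.differentiableAt_of_isOpen hU one_ne_zero hx
  have hderiv : ∀ i j k : Fin n,
      (fun r => pd (fun z => pd (fun y => f y r) i z) k x)
          ⬝ᵥ (ω *ᵥ fun r => pd (fun y => f y r) j x)
        + (fun r => pd (fun z => pd (fun y => f y r) j z) k x)
          ⬝ᵥ (ω *ᵥ fun r => pd (fun y => f y r) i x)
        = Real.exp (2 * α x) * (2 * pd α k x * ω i j) := by
    intro i j k
    have h := pd_congr_of_eqOn hU (fun y hy => hconf y hy i j) hx k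
    rw [pd_bilin ω (u := fun r z => pd (fun y => f y r) i z)
      (v := fun r z => pd (fun y => f y r) j z) (hdf i) (hdf j),
      pd_exp_two_mul hda (differentiableAt_const _)] at h
    rw [dotProduct_mulVec_comm_of_isSymm hsym (fun r => pd (fun z => pd (fun y => f y r) j z) k x),
      h]
    simp [pd]
  have hcomm : ∀ i j, (fun r => pd (fun z => pd (fun y => f y r) i z) j x)
      = fun r => pd (fun z => pd (fun y => f y r) j z) i x := fun i j =>
    funext fun r => pd_comm hU (hf r) hx i j
  have h1 := hderiv i k j
  have h2 := hderiv j k i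
  have h3 := hderiv i j k
  rw [hcomm k j] at h1
  rw [hcomm k i, hcomm j i] at h2
  simp only [christoffelVec]
  linear_combination (h1 + h2 - h3) / 2

/-- The difference of a Hessian and the right-hand side of the flat c-system. -/
noncomputable def cSystemDefect (ω : Matrix (Fin n) (Fin n) ℝ) (α : (Fin n → ℝ) → ℝ)
    (x : Fin n → ℝ) : Matrix (Fin n) (Fin n) ℝ :=
  Matrix.of fun i j => pd (fun y => pd α j y) i x - pd α i x * pd α j x
    + (1 / 2) * ((fun k => pd α k x) ⬝ᵥ ω⁻¹ *ᵥ fun k => pd α k x) * ω i j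

lemma kulkarniNomizu_cSystemDefect_eq_zero (hinv : IsUnit ω.det) (hsym : ω.IsSymm)
    (hU : IsOpen U) (hf : ∀ r, ContDiffOn ℝ 3 (fun y => f y r) U) (hα : ContDiffOn ℝ 2 α U)
    (hconf : ∀ x ∈ U, ∀ i j : Fin n,
      (fun r => pd (fun y => f y r) i x) ⬝ᵥ (ω *ᵥ fun r => pd (fun y => f y r) j x)
        = Real.exp (2 * α x) * ω i j) {x : Fin n → ℝ} (hx : x ∈ U) (i j k l : Fin n) :
    cSystemDefect ω α x i l * ω j k - cSystemDefect ω α x k l * ω i j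
      - cSystemDefect ω α x i j * ω l k + cSystemDefect ω α x k j * ω i l = 0 := by
  have hs : ∀ i j, ω i j = ω j i := fun i j => hsym.apply j i
  have hfst : ∀ {y}, y ∈ U → ∀ i j k, _ := fun {y} hy => snd_pd_dotProduct_of_conformal hsym hU
    (fun r => (hf r).of_le (by norm_num)) (hα.of_le (by norm_num)) hconf hy
  have hdf : ∀ i r, ContDiffOn ℝ 2 (fun z => pd (fun y => f y r) i z) U := fun i r =>
    (hf r).pd hU (by norm_num) i
  have hdf1 : ∀ i r, DifferentiableAt ℝ (fun z => pd (fun y => f y r) i z) x := fun i r =>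
    (hdf i r).differentiableAt_of_isOpen hU two_ne_zero hx
  have hdf2 : ∀ i j r, DifferentiableAt ℝ
      (fun w => pd (fun z => pd (fun y => f y r) i z) j w) x := fun i j r =>
    ((hdf i r).pd (m := 1) hU (by norm_num) j).differentiableAt_of_isOpen hU one_ne_zero hx
  have hda := hα.differentiableAt_of_isOpen hU two_ne_zero hx
  have hda1 : ∀ i, DifferentiableAt ℝ (fun y => pd α i y) x := fun i =>
    (hα.pd (m := 1) hU (by norm_num) i).differentiableAt_of_isOpen hU one_ne_zero hx
  have hac : ∀ i j, pd (fun y => pd α i y) j x = pd (fun y => pd α j y) i x := fun i j =>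
    pd_comm hU hα hx i j
  set e := Real.exp (2 * α x) with he
  have he0 : e ≠ 0 := Real.exp_ne_zero _
  set a : Fin n → ℝ := fun m => pd α m x with ha
  -- products of second derivatives, through the Gram matrix of the first derivatives
  have hJ : (Matrix.of fun r i => pd (fun y => f y r) i x)ᵀ * ω
      * (Matrix.of fun r i => pd (fun y => f y r) i x) = e • ω := by
    ext i j
    rw [Matrix.mul_assoc, Matrix.smul_apply, smul_eq_mul, ← hconf x hx i j]
    rfl
  have hquad : ∀ i j k l, (fun r => pd (fun z => pd (fun y => f y r) i z) j x)
      ⬝ᵥ (ω *ᵥ fun r => pd (fun z => pd (fun y => f y r) k z) l x)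
      = e * (christoffelVec ω a i j ⬝ᵥ ω⁻¹ *ᵥ christoffelVec ω a k l) := by
    intro i j k l
    have h := dotProduct_mulVec_of_conformal hinv he0 hJ
      (fun r => pd (fun z => pd (fun y => f y r) i z) j x)
      (fun r => pd (fun z => pd (fun y => f y r) k z) l x)
    have h1 : (fun r => pd (fun z => pd (fun y => f y r) i z) j x) ᵥ*
        (ω * Matrix.of fun r i => pd (fun y => f y r) i x)
        = e • christoffelVec ω a i j := by
      ext p
      rw [Pi.smul_apply, smul_eq_mul, ← hfst hx i j p]
      rfl
    have h2 : ((Matrix.of fun r i => pd (fun y => f y r) i x)ᵀ * ω) *ᵥ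
        (fun r => pd (fun z => pd (fun y => f y r) k z) l x)
        = e • christoffelVec ω a k l := by
      ext p
      rw [Pi.smul_apply, smul_eq_mul, ← hfst hx k l p,
        dotProduct_mulVec_comm_of_isSymm hsym, ← mulVec_mulVec]
      rfl
    rw [h1, h2, mulVec_smul, smul_dotProduct, dotProduct_smul, smul_eq_mul, smul_eq_mul] at h
    exact (mul_left_cancel₀ he0 h).symm
  -- derivative of the second order identity
  have hthird : ∀ i j k l,
      (fun r => pd (fun w => pd (fun z => pd (fun y => f y r) i z) j w) l x)
          ⬝ᵥ (ω *ᵥ fun r => pd (fun y => f y r) k x)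
        + e * (christoffelVec ω a i j ⬝ᵥ ω⁻¹ *ᵥ christoffelVec ω a k l)
        = e * (2 * a l * christoffelVec ω a i j k
          + (pd (fun y => pd α i y) l x * ω j k + pd (fun y => pd α j y) l x * ω i k
            - pd (fun y => pd α k y) l x * ω i j)) := by
    intro i j k l
    have h := pd_congr_of_eqOn hU (fun y hy => hfst hy i j k) hx l
    have hc := (((hda1 i).hasFDerivAt.mul_const (ω j k)).fun_add
      ((hda1 j).hasFDerivAt.mul_const (ω i k))).fun_sub ((hda1 k).hasFDerivAt.mul_const (ω i j))
    have hc' : pd (fun y => christoffelVec ω (fun m => pd α m y) i j k) l x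
        = pd (fun y => pd α i y) l x * ω j k + pd (fun y => pd α j y) l x * ω i k
            - pd (fun y => pd α k y) l x * ω i j := by
      conv_lhs => rw [pd]
      refine (congrArg (fun L => L (Pi.single l 1)) hc.fderiv).trans ?_
      simp only [_root_.sub_apply, _root_.add_apply, _root_.smul_apply, smul_eq_mul]
      simp only [pd]
      ring
    rw [pd_bilin ω (u := fun r w => pd (fun z => pd (fun y => f y r) i z) j w)
      (v := fun r z => pd (fun y => f y r) k z) (hdf2 i j) (hdf1 k),
      pd_exp_two_mul (β := fun y => christoffelVec ω (fun m => pd α m y) i j k) hda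
        hc.differentiableAt, hc', hquad] at h
    exact h
  have hcomm : (fun r => pd (fun w => pd (fun z => pd (fun y => f y r) i z) j w) l x)
      = fun r => pd (fun w => pd (fun z => pd (fun y => f y r) i z) l w) j x :=
    funext fun r => pd_comm hU (hdf i r) hx j l
  have h1 := hthird i j k l
  have h2 := hthird i l k j
  rw [hcomm] at h1
  rw [christoffelVec_dotProduct_christoffelVec hinv hsym] at h1 h2
  refine mul_left_cancel₀ he0 ?_
  simp only [cSystemDefect, of_apply, christoffelVec] at h1 h2 ⊢
  rw [hac l j] at h2
  rw [hac l i, hac l k, hac j i, hac j k]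
  simp only [hs j i, hs k i, hs l i, hs k j, hs l j, hs l k] at h1 h2 ⊢
  linear_combination h2 - h1

end Conformal

/-- for `n ≥ 3`, the conformal exponent `α` of a conformal transformation of a
constant metric satisfies the flat c-system
`∂ᵢ∂ⱼα = ∂ᵢα ∂ⱼα − ½ (Σ_{k,l} ω^{kl} ∂_kα ∂_lα) ω_{ij}`. -/
theorem stmt_5 (n : ℕ) (hn : 3 ≤ n) (ω : Matrix (Fin n) (Fin n) ℝ)
    (hinv : IsUnit ω.det) (hsym : ω.IsSymm)
    (U : Set (Fin n → ℝ)) (hU : IsOpen U) (hconn : IsConnected U)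
    (f : (Fin n → ℝ) → (Fin n → ℝ)) (α : (Fin n → ℝ) → ℝ)
    (hf : ContDiffOn ℝ 3 f U) (hα : ContDiffOn ℝ 2 α U)
    (hconf : ∀ x ∈ U, ∀ i j : Fin n,
      ∑ r, ∑ s, ω r s * pd (fun y => f y r) i x * pd (fun y => f y s) j x
        = Real.exp (2 * α x) * ω i j) :
    ∀ x ∈ U, ∀ i j : Fin n,
      pd (fun y => pd α j y) i x
        = pd α i x * pd α j x
          - (1 / 2) * (∑ k, ∑ l, ω⁻¹ k l * pd α k x * pd α l x) * ω i j := by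
  have hform : ∀ (M : Matrix (Fin n) (Fin n) ℝ) (u v : Fin n → ℝ),
      ∑ r, ∑ s, M r s * u r * v s = u ⬝ᵥ M *ᵥ v := by
    intro M u v
    simp only [dotProduct, mulVec, Finset.mul_sum]
    exact Finset.sum_congr rfl fun r _ => Finset.sum_congr rfl fun s _ => by ring
  intro x hx i j
  have hzero := eq_zero_of_kulkarniNomizu_eq_zero hn hinv hsym
    (kulkarniNomizu_cSystemDefect_eq_zero hinv hsym hU (contDiffOn_pi.mp hf) hα
      (fun y hy i j => (hform ω _ _).symm.trans (hconf y hy i j)) hx)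
  have h := congrFun (congrFun hzero i) j
  rw [cSystemDefect, of_apply, Matrix.zero_apply] at h
  rw [hform]
  linarith
end

section
/- Let ω be a constant invertible symmetric n×n real matrix with inverse entries ω^{kl}, and define F_{ik}: ℝⁿ → ℝ by F_{ik}(c) := c_i c_k − ½ (Σ_{r,s} ω^{rs} c_r c_s) ω_{ik}. On M = ℝⁿ × ℝ × ℝⁿ with coordinates (x, c₀, c), define for each k ∈ {1,…,n} the smooth vector field X_k(x, c₀, c) := (e_k, c_k, (F_{1k}(c), …, F_{nk}(c))), where e_k is the k-th standard basis vector of ℝⁿ. Then all pairwise Lie brackets vanish: for all j, k and every point p ∈ M, (DX_k)_p(X_j(p)) − (DX_j)_p(X_k(p)) = 0. -/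
open Matrix

/-- Derivative of the quadratic form of a symmetric matrix. -/
theorem hasFDerivAt_quadratic_of_isSymm {n : ℕ} {A : Matrix (Fin n) (Fin n) ℝ} (hA : A.IsSymm)
    (c : Fin n → ℝ) :
    HasFDerivAt (fun c : Fin n → ℝ => ∑ r, ∑ s, A r s * c r * c s)
      (∑ r, (2 * (A *ᵥ c) r) • ContinuousLinearMap.proj (R := ℝ) (φ := fun _ : Fin n => ℝ) r)
      c := by
  have hproj (r : Fin n) : HasFDerivAt (fun c : Fin n → ℝ => c r)
      (ContinuousLinearMap.proj (R := ℝ) (φ := fun _ : Fin n => ℝ) r) c :=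
    hasFDerivAt_apply r c
  have h := HasFDerivAt.fun_sum (u := Finset.univ) fun r _ =>
    HasFDerivAt.fun_sum (u := Finset.univ) fun s _ =>
      ((hproj r).const_mul (A r s)).mul (hproj s)
  refine h.congr_fderiv ?_
  ext v
  simp only [_root_.sum_apply, _root_.add_apply,
    _root_.smul_apply, ContinuousLinearMap.proj_apply, smul_eq_mul,
    Finset.sum_add_distrib, mulVec, dotProduct, two_mul, add_mul, Finset.sum_mul]
  congr 1
  · rw [Finset.sum_comm]
    refine Finset.sum_congr rfl fun r _ => Finset.sum_congr rfl fun s _ => ?_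
    rw [hA.apply]
  · refine Finset.sum_congr rfl fun r _ => Finset.sum_congr rfl fun s _ => ?_
    ring

/-- Contracting `A⁻¹ c` with the `j`-th column of the flat c-system. -/
theorem sum_inv_mulVec_mul_column {n : ℕ} {A : Matrix (Fin n) (Fin n) ℝ} (hdet : IsUnit A.det)
    (hA : A.IsSymm) (c : Fin n → ℝ) (j : Fin n) (q : ℝ)
    (hq : q = ∑ r, ∑ s, A⁻¹ r s * c r * c s) :
    ∑ r, 2 * (A⁻¹ *ᵥ c) r * (c r * c j - 1 / 2 * q * A r j) = q * c j := by
  have hquad : ∑ r, (A⁻¹ *ᵥ c) r * c r = q := by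
    rw [hq]
    simp only [mulVec, dotProduct, Finset.sum_mul]
    refine Finset.sum_congr rfl fun r _ => Finset.sum_congr rfl fun s _ => ?_
    ring
  have hcol : ∑ r, (A⁻¹ *ᵥ c) r * A r j = c j := by
    have h : (A *ᵥ (A⁻¹ *ᵥ c)) j = c j := by
      rw [mulVec_mulVec, mul_nonsing_inv _ hdet, one_mulVec]
    rw [← h, mulVec, dotProduct]
    refine Finset.sum_congr rfl fun r _ => ?_
    rw [← hA.apply, mul_comm]
  calc ∑ r, 2 * (A⁻¹ *ᵥ c) r * (c r * c j - 1 / 2 * q * A r j)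
      = 2 * c j * ∑ r, (A⁻¹ *ᵥ c) r * c r - q * ∑ r, (A⁻¹ *ᵥ c) r * A r j := by
        rw [Finset.mul_sum, Finset.mul_sum, ← Finset.sum_sub_distrib]
        exact Finset.sum_congr rfl fun r _ => by ring
    _ = q * c j := by rw [hquad, hcol]; ring

/-- the vector fields `X_k(x, c₀, c) = (e_k, c_k, (F_{1k}(c), …, F_{nk}(c)))`
spanning the distribution annihilated by the Pfaff system of the flat c-system commute
pairwise (Fröbenius involutivity). -/
theorem stmt_6 (n : ℕ) (ω : Matrix (Fin n) (Fin n) ℝ)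
    (hinv : IsUnit ω.det) (hsym : ω.IsSymm)
    (F : Fin n → Fin n → (Fin n → ℝ) → ℝ)
    (hF : ∀ i k c, F i k c
      = c i * c k - (1 / 2) * (∑ r, ∑ s, ω⁻¹ r s * c r * c s) * ω i k)
    (X : Fin n → ((Fin n → ℝ) × ℝ × (Fin n → ℝ)) → ((Fin n → ℝ) × ℝ × (Fin n → ℝ)))
    (hX : ∀ k p, X k p = (Pi.single k 1, p.2.2 k, fun i => F i k p.2.2)) :
    ∀ (j k : Fin n) (p : (Fin n → ℝ) × ℝ × (Fin n → ℝ)),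
      fderiv ℝ (X k) p (X j p) - fderiv ℝ (X j) p (X k p) = 0 := by
  intro j k p
  have hproj (i : Fin n) : HasFDerivAt (fun c : Fin n → ℝ => c i)
      (ContinuousLinearMap.proj (R := ℝ) (φ := fun _ : Fin n => ℝ) i) p.2.2 :=
    hasFDerivAt_apply i p.2.2
  have hsnd : HasFDerivAt (fun p : (Fin n → ℝ) × ℝ × (Fin n → ℝ) => p.2.2)
      ((ContinuousLinearMap.snd ℝ ℝ (Fin n → ℝ)).comp
        (ContinuousLinearMap.snd ℝ (Fin n → ℝ) (ℝ × (Fin n → ℝ)))) p :=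
    hasFDerivAt_snd.comp p hasFDerivAt_snd
  have hinvsym : (ω⁻¹).IsSymm := by
    rw [Matrix.IsSymm, transpose_nonsing_inv, hsym]
  have hderiv (k : Fin n) (v : (Fin n → ℝ) × ℝ × (Fin n → ℝ)) :
      fderiv ℝ (X k) p v = (0, v.2.2 k, fun i => p.2.2 i * v.2.2 k + p.2.2 k * v.2.2 i
        - 1 / 2 * (∑ r, 2 * (ω⁻¹ *ᵥ p.2.2) r * v.2.2 r) * ω i k) := by
    have hcol := hasFDerivAt_pi.2 fun i : Fin n =>
      (((hproj i).mul (hproj k)).sub (((hasFDerivAt_quadratic_of_isSymm hinvsym p.2.2).const_mul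
        (1 / 2)).mul_const (ω i k))).comp p hsnd
    have h := (hasFDerivAt_const (Pi.single k 1 : Fin n → ℝ) p).prodMk
      (((hproj k).comp p hsnd).prodMk hcol)
    have hXk : X k = _ := funext fun q => by
      simpa only [hF] using hX k q
    rw [hXk]
    refine (congrArg (fun L => L v) h.fderiv).trans ?_
    ext i
    · simp
    · simp
    · simp
      ring
  rw [hderiv, hderiv, sub_eq_zero]
  simp only [hX, hF, sum_inv_mulVec_mul_column hinv hsym p.2.2 _ _ rfl]
  refine Prod.ext rfl (Prod.ext ?_ (funext fun i => ?_))
  · simp only [hsym.apply j k]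
    ring
  · simp only [hsym.apply j k]
    ring
end

section
/- Let ω be a constant invertible symmetric n×n real matrix with inverse entries ω^{kl}. For every x₀ ∈ ℝⁿ, c₀ ∈ ℝ and c₁ ∈ ℝⁿ, there exist r > 0 and a C^∞ function α on the open ball B(x₀, r) such that α satisfies the flat c-system ∂_i∂_j α = ∂_iα ∂_jα − ½ (Σ_{k,l} ω^{kl} ∂_kα ∂_lα) ω_{ij} on B(x₀, r) for all i,j, with prescribed 1-jet α(x₀) = c₀ and ∂_iα(x₀) = (c₁)_i for all i. -/
open Matrix

theorem HasFDerivAt.pd_eq {n : ℕ} {f : (Fin n → ℝ) → ℝ} {f' : (Fin n → ℝ) →L[ℝ] ℝ}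
    {x : Fin n → ℝ} (h : HasFDerivAt f f' x) (i : Fin n) : pd f i x = f' (Pi.single i 1) := by
  rw [pd, h.fderiv]

/-- The quadratic function `1 - c ⬝ (x - x₀) + (q / 2) (x - x₀) ⬝ ω (x - x₀)`. -/
noncomputable def quadFun {n : ℕ} (ω : Matrix (Fin n) (Fin n) ℝ) (x₀ c : Fin n → ℝ) (q : ℝ)
    (x : Fin n → ℝ) : ℝ :=
  1 - c ⬝ᵥ (x - x₀) + q / 2 * ((x - x₀) ⬝ᵥ ω *ᵥ (x - x₀))

/-- The gradient of `quadFun` for symmetric `ω`. -/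
noncomputable def quadGrad {n : ℕ} (ω : Matrix (Fin n) (Fin n) ℝ) (x₀ c : Fin n → ℝ) (q : ℝ)
    (x : Fin n → ℝ) : Fin n → ℝ :=
  q • ω *ᵥ (x - x₀) - c

theorem contDiff_quadFun {n : ℕ} (ω : Matrix (Fin n) (Fin n) ℝ) (x₀ c : Fin n → ℝ) (q : ℝ)
    {m : WithTop ℕ∞} : ContDiff ℝ m (quadFun ω x₀ c q) := by
  unfold quadFun
  simp only [dotProduct, mulVec, Pi.sub_apply]
  fun_prop

theorem hasFDerivAt_coord_sub {n : ℕ} (x₀ x : Fin n → ℝ) (k : Fin n) :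
    HasFDerivAt (fun y : Fin n → ℝ => y k - x₀ k)
      (ContinuousLinearMap.proj (R := ℝ) (φ := fun _ : Fin n => ℝ) k) x :=
  (hasFDerivAt_apply k x).sub_const _

theorem pd_quadFun {n : ℕ} {ω : Matrix (Fin n) (Fin n) ℝ} (hsym : ω.IsSymm)
    (x₀ c : Fin n → ℝ) (q : ℝ) (i : Fin n) (x : Fin n → ℝ) :
    pd (quadFun ω x₀ c q) i x = quadGrad ω x₀ c q x i := by
  have hc := hasFDerivAt_coord_sub x₀ x
  have hlin := HasFDerivAt.fun_sum (u := Finset.univ) fun k _ => (hc k).const_mul (c k)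
  have hquad := HasFDerivAt.fun_sum (u := Finset.univ) fun k _ =>
    (hc k).fun_mul (HasFDerivAt.fun_sum (u := Finset.univ) fun l _ => (hc l).const_mul (ω k l))
  have h : HasFDerivAt (quadFun ω x₀ c q) _ x :=
    (hlin.const_sub 1).fun_add (hquad.const_mul (q / 2))
  rw [h.pd_eq]
  have hs : ∀ k, ω k i = ω i k := fun k => hsym.apply i k
  simp [quadGrad, mulVec, dotProduct, Pi.single_apply, Finset.sum_add_distrib, hs]
  simp only [mul_comm (_ - _) (ω i _)]
  ring

theorem hasFDerivAt_quadGrad {n : ℕ} (ω : Matrix (Fin n) (Fin n) ℝ) (x₀ c : Fin n → ℝ) (q : ℝ)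
    (j : Fin n) (x : Fin n → ℝ) :
    HasFDerivAt (fun y => quadGrad ω x₀ c q y j)
      (q • ∑ l, ω j l • ContinuousLinearMap.proj (R := ℝ) (φ := fun _ : Fin n => ℝ) l) x :=
  ((HasFDerivAt.fun_sum (u := Finset.univ) fun l _ =>
    (hasFDerivAt_coord_sub x₀ x l).const_mul (ω j l)).const_mul q).sub_const (c j)

/-- With `2 q = c ⬝ ω⁻¹ c`, the function `u = quadFun` satisfies `|∇u|² = 2 q u`. -/
theorem quadGrad_dotProduct_inv_mulVec {n : ℕ} {ω : Matrix (Fin n) (Fin n) ℝ}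
    (hinv : IsUnit ω.det) (hsym : ω.IsSymm) (x₀ c : Fin n → ℝ) {q : ℝ}
    (hq : c ⬝ᵥ ω⁻¹ *ᵥ c = 2 * q) (x : Fin n → ℝ) :
    quadGrad ω x₀ c q x ⬝ᵥ ω⁻¹ *ᵥ quadGrad ω x₀ c q x = 2 * q * quadFun ω x₀ c q x := by
  unfold quadGrad quadFun
  generalize x - x₀ = v
  have h1 : ω⁻¹ *ᵥ (ω *ᵥ v) = v := by
    rw [mulVec_mulVec, nonsing_inv_mul _ hinv, one_mulVec]
  have h2 : (ω *ᵥ v) ⬝ᵥ (ω⁻¹ *ᵥ c) = c ⬝ᵥ v := by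
    rw [dotProduct_mulVec, ← mulVec_transpose, transpose_nonsing_inv, hsym.eq, h1,
      dotProduct_comm]
  have h3 : (ω *ᵥ v) ⬝ᵥ v = v ⬝ᵥ ω *ᵥ v := dotProduct_comm _ _
  simp only [mulVec_sub, mulVec_smul, sub_dotProduct, dotProduct_sub, smul_dotProduct,
    dotProduct_smul, h1, h2, h3, hq, smul_eq_mul]
  ring

/-- local solvability of the flat c-system with arbitrarily prescribed 1-jet
`(c₀, c₁)` at any point `x₀`. -/
theorem stmt_7 (n : ℕ) (ω : Matrix (Fin n) (Fin n) ℝ)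
    (hinv : IsUnit ω.det) (hsym : ω.IsSymm) :
    ∀ (x₀ : Fin n → ℝ) (c₀ : ℝ) (c₁ : Fin n → ℝ),
      ∃ r > (0 : ℝ), ∃ α : (Fin n → ℝ) → ℝ,
        ContDiffOn ℝ (⊤ : ℕ∞) α (Metric.ball x₀ r) ∧
        (∀ x ∈ Metric.ball x₀ r, ∀ i j : Fin n,
          pd (fun y => pd α j y) i x
            = pd α i x * pd α j x
              - (1 / 2) * (∑ k, ∑ l, ω⁻¹ k l * pd α k x * pd α l x) * ω i j) ∧
        α x₀ = c₀ ∧ ∀ i : Fin n, pd α i x₀ = c₁ i := by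
  intro x₀ c₀ c₁
  obtain ⟨q, hq⟩ : ∃ q : ℝ, c₁ ⬝ᵥ ω⁻¹ *ᵥ c₁ = 2 * q := ⟨(c₁ ⬝ᵥ ω⁻¹ *ᵥ c₁) / 2, by ring⟩
  set u := quadFun ω x₀ c₁ q with hu
  set g := quadGrad ω x₀ c₁ q with hg
  have hcd : ContDiff ℝ (⊤ : ℕ∞) u := contDiff_quadFun ω x₀ c₁ q
  have hdiff : Differentiable ℝ u := hcd.differentiable (by simp)
  have hu₀ : u x₀ = 1 := by simp [hu, quadFun]
  have hpos : ∀ᶠ x in nhds x₀, 0 < u x :=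
    hcd.continuous.continuousAt.eventually_const_lt (by rw [hu₀]; exact one_pos)
  obtain ⟨r, hr, hball⟩ := Metric.eventually_nhds_iff_ball.1 hpos
  have hpd : ∀ x ∈ Metric.ball x₀ r, ∀ j,
      pd (fun y => c₀ - Real.log (u y)) j x = -(g x j * (u x)⁻¹) := by
    intro x hx j
    have h := ((hdiff x).hasFDerivAt.log (hball x hx).ne').const_sub c₀
    have huj : fderiv ℝ u x (Pi.single j 1) = g x j := pd_quadFun hsym x₀ c₁ q j x
    rw [h.pd_eq]
    simp [huj, mul_comm]
  refine ⟨r, hr, fun y => c₀ - Real.log (u y), ?_, ?_, ?_, ?_⟩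
  · exact contDiffOn_const.sub (hcd.contDiffOn.log fun x hx => (hball x hx).ne')
  · intro x hx i j
    have hux : u x ≠ 0 := (hball x hx).ne'
    have hev : (fun y => pd (fun y => c₀ - Real.log (u y)) j y) =ᶠ[nhds x]
        fun y => -(g y j * (u y)⁻¹) :=
      Filter.eventuallyEq_of_mem (Metric.isOpen_ball.mem_nhds hx) fun y hy => hpd y hy j
    have hder := (((hasFDerivAt_quadGrad ω x₀ c₁ q j x).fun_mul
      ((hasDerivAt_inv hux).comp_hasFDerivAt x (hdiff x).hasFDerivAt)).fun_neg).congr_of_eventuallyEq hev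
    have hui : fderiv ℝ u x (Pi.single i 1) = g x i := pd_quadFun hsym x₀ c₁ q i x
    have hsum : ∑ k, ∑ l, ω⁻¹ k l * -(g x k * (u x)⁻¹) * -(g x l * (u x)⁻¹) = 2 * q / u x := by
      have key : g x ⬝ᵥ ω⁻¹ *ᵥ g x = 2 * q * u x :=
        quadGrad_dotProduct_inv_mulVec hinv hsym x₀ c₁ hq x
      have : 2 * q / u x = (g x ⬝ᵥ ω⁻¹ *ᵥ g x) / u x ^ 2 := by
        rw [key]; field_simp
      rw [this]
      simp only [dotProduct, mulVec, Finset.mul_sum, Finset.sum_div]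
      refine Finset.sum_congr rfl fun k _ => Finset.sum_congr rfl fun l _ => ?_
      field_simp
    simp only [hpd x hx, hsum]
    rw [hder.pd_eq]
    simp [hui, Pi.single_apply, hsym.apply i j, ← hg]
    field_simp
    ring
  · simp [hu₀]
  · intro i
    rw [hpd x₀ (Metric.mem_ball_self hr) i, hu₀]
    simp [hg, quadGrad]
end

section
/- Let ω be a constant invertible symmetric n×n real matrix with inverse entries ω^{kl}, let U ⊆ ℝⁿ be open and connected, x₀ ∈ U, and let α, β: U → ℝ be C² solutions of the flat c-system ∂_i∂_j u = ∂_iu ∂_ju − ½ (Σ_{k,l} ω^{kl} ∂_ku ∂_lu) ω_{ij} on U. If α(x₀) = β(x₀) and ∂_iα(x₀) = ∂_iβ(x₀) for all i, then α = β on U. -/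
open Matrix

/-- Two solutions of a total differential system `Df = G(f)` with `G` of class `C¹` on a connected
open set coincide as soon as they agree at one point. -/
theorem eqOn_of_hasFDerivAt_of_contDiff {E F : Type*}
    [NormedAddCommGroup E] [NormedSpace ℝ E] [NormedAddCommGroup F] [NormedSpace ℝ F]
    {G : F → E →L[ℝ] F} (hG : ContDiff ℝ 1 G) {U : Set E} (hU : IsOpen U)
    (hconn : IsPreconnected U) {f g : E → F}
    (hf : ∀ x ∈ U, HasFDerivAt f (G (f x)) x) (hg : ∀ x ∈ U, HasFDerivAt g (G (g x)) x)
    {x₀ : E} (hx₀ : x₀ ∈ U) (h : f x₀ = g x₀) : Set.EqOn f g U := by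
  suffices hsub : U ⊆ {x | x ∈ U ∧ f x = g x} from fun x hx => (hsub hx).2
  refine hconn.subset_of_closure_inter_subset ?_ ⟨x₀, hx₀, hx₀, h⟩ ?_
  · rw [Metric.isOpen_iff]
    rintro x ⟨hx, hxe⟩
    obtain ⟨K, t, ht, hK⟩ := hG.contDiffAt (x := f x) |>.exists_lipschitzOnWith
    have hnear : ∀ᶠ y in nhds x, y ∈ U ∧ f y ∈ t ∧ g y ∈ t :=
      (hU.eventually_mem hx).and (((hf x hx).continuousAt.eventually_mem ht).and
        ((hg x hx).continuousAt.eventually_mem (hxe ▸ ht)))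
    obtain ⟨ε, hε, hball⟩ := Metric.eventually_nhds_iff_ball.1 hnear
    refine ⟨ε, hε, fun y hy => ⟨(hball y hy).1, ?_⟩⟩
    have hline : ∀ s ∈ Set.Icc (0 : ℝ) 1, AffineMap.lineMap x y s ∈ Metric.ball x ε :=
      fun s hs => (convex_ball x ε).lineMap_mem (Metric.mem_ball_self hε) hy hs
    have hderiv : ∀ {φ : E → F}, (∀ z ∈ U, HasFDerivAt φ (G (φ z)) z) →
        ∀ s ∈ Set.Icc (0 : ℝ) 1, HasDerivAt (fun s => φ (AffineMap.lineMap x y s))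
          (G (φ (AffineMap.lineMap x y s)) (y - x)) s := fun hφ s hs =>
      (hφ _ (hball _ (hline s hs)).1).comp_hasDerivAt s AffineMap.hasDerivAt_lineMap
    have hlip : LipschitzOnWith (K * ‖y - x‖₊) (fun p => G p (y - x)) t := by
      refine LipschitzOnWith.of_dist_le_mul fun p hp q hq => ?_
      rw [dist_eq_norm, ← _root_.sub_apply, NNReal.coe_mul, coe_nnnorm]
      have := hK.dist_le_mul p hp q hq
      rw [dist_eq_norm] at this
      calc ‖(G p - G q) (y - x)‖ ≤ ‖G p - G q‖ * ‖y - x‖ := (G p - G q).le_opNorm _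
        _ ≤ K * dist p q * ‖y - x‖ := by gcongr
        _ = K * ‖y - x‖ * dist p q := by ring
    have hEq := ODE_solution_unique_of_mem_Icc_right
      (v := fun _ p => G p (y - x)) (s := fun _ => t) (fun _ _ => hlip)
      (fun s hs => (hderiv hf s hs).continuousAt.continuousWithinAt)
      (fun s hs => (hderiv hf s (Set.Ico_subset_Icc_self hs)).hasDerivWithinAt)
      (fun s hs => (hball _ (hline s (Set.Ico_subset_Icc_self hs))).2.1)
      (fun s hs => (hderiv hg s hs).continuousAt.continuousWithinAt)
      (fun s hs => (hderiv hg s (Set.Ico_subset_Icc_self hs)).hasDerivWithinAt)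
      (fun s hs => (hball _ (hline s (Set.Ico_subset_Icc_self hs))).2.2)
      (by simpa using hxe)
    simpa using hEq (Set.right_mem_Icc.2 zero_le_one)
  · rintro x ⟨hxc, hx⟩
    refine ⟨hx, ?_⟩
    have : (nhdsWithin x {z | z ∈ U ∧ f z = g z}).NeBot := mem_closure_iff_nhdsWithin_neBot.1 hxc
    refine tendsto_nhds_unique_of_eventuallyEq (l := nhdsWithin x {z | z ∈ U ∧ f z = g z})
      ((hf x hx).continuousAt.tendsto.mono_left nhdsWithin_le_nhds)
      ((hg x hx).continuousAt.tendsto.mono_left nhdsWithin_le_nhds) ?_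
    filter_upwards [self_mem_nhdsWithin] with z hz using hz.2

/-- A differentiable function has the differential assembled from its partial derivatives. -/
theorem hasFDerivAt_sum_pd {n : ℕ} {f : (Fin n → ℝ) → ℝ} {x : Fin n → ℝ}
    (hf : DifferentiableAt ℝ f x) :
    HasFDerivAt f
      (∑ i, (ContinuousLinearMap.proj i : (Fin n → ℝ) →L[ℝ] ℝ).smulRight (pd f i x)) x := by
  refine hf.hasFDerivAt.congr_fderiv (ContinuousLinearMap.ext fun v => ?_)
  have hv : v = ∑ i, v i • Pi.single i (1 : ℝ) := pi_eq_sum_univ' v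
  calc fderiv ℝ f x v = fderiv ℝ f x (∑ i, v i • Pi.single i (1 : ℝ)) := by rw [← hv]
    _ = _ := by simp only [map_sum, map_smul, _root_.sum_apply,
      ContinuousLinearMap.smulRight_apply, ContinuousLinearMap.proj_apply, pd]

/-- The right-hand side of the flat c-system, as a first-order total differential system for the
pair of a function and its vector of partial derivatives. -/
noncomputable def cSystemField {n : ℕ} (ω : Matrix (Fin n) (Fin n) ℝ) (q : ℝ × (Fin n → ℝ)) :
    (Fin n → ℝ) →L[ℝ] ℝ × (Fin n → ℝ) :=
  ∑ i, (ContinuousLinearMap.proj i : (Fin n → ℝ) →L[ℝ] ℝ).smulRight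
    (q.2 i, fun j => q.2 i * q.2 j
      - (1 / 2) * (∑ k, ∑ l, ω⁻¹ k l * q.2 k * q.2 l) * ω i j)

theorem contDiff_cSystemField {n : ℕ} (ω : Matrix (Fin n) (Fin n) ℝ) :
    ContDiff ℝ 1 (cSystemField ω) := by
  unfold cSystemField
  refine ContDiff.sum fun i _ => ContDiff.smulRight contDiff_const ?_
  fun_prop

/-- The 1-jet of a `C²` solution of the flat c-system solves the total differential system given by
`cSystemField`. -/
theorem hasFDerivAt_jet_of_cSystem {n : ℕ} {ω : Matrix (Fin n) (Fin n) ℝ}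
    {U : Set (Fin n → ℝ)} (hU : IsOpen U) {u : (Fin n → ℝ) → ℝ} (hu : ContDiffOn ℝ 2 u U)
    (hequ : ∀ x ∈ U, ∀ i j : Fin n,
      pd (fun y => pd u j y) i x
        = pd u i x * pd u j x
          - (1 / 2) * (∑ k, ∑ l, ω⁻¹ k l * pd u k x * pd u l x) * ω i j)
    {x : Fin n → ℝ} (hx : x ∈ U) :
    HasFDerivAt (fun y => (u y, fun j => pd u j y))
      (cSystemField ω (u x, fun j => pd u j x)) x := by
  have hux : ContDiffAt ℝ 2 u x := hu.contDiffAt (hU.mem_nhds hx)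
  have hpd : ∀ j, DifferentiableAt ℝ (fun y => pd u j y) x := fun j =>
    ((hux.fderiv_right (m := 1) (by norm_num)).differentiableAt one_ne_zero).clm_apply
      (differentiableAt_const _)
  refine ((hasFDerivAt_sum_pd (hux.differentiableAt two_ne_zero)).prodMk
    (hasFDerivAt_pi.2 fun j => hasFDerivAt_sum_pd (hpd j))).congr_fderiv
      (ContinuousLinearMap.ext fun v => Prod.ext ?_ (funext fun j => ?_))
  · simp [cSystemField, _root_.sum_apply, Prod.fst_sum]
  · simp [cSystemField, _root_.sum_apply, Prod.snd_sum, hequ x hx]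

/-- two C² solutions of the flat c-system on a connected open set having the
same 1-jet at one point coincide. -/
theorem stmt_8 (n : ℕ) (ω : Matrix (Fin n) (Fin n) ℝ)
    (hinv : IsUnit ω.det) (hsym : ω.IsSymm)
    (U : Set (Fin n → ℝ)) (hU : IsOpen U) (hconn : IsConnected U)
    (x₀ : Fin n → ℝ) (hx₀ : x₀ ∈ U)
    (α β : (Fin n → ℝ) → ℝ)
    (hα : ContDiffOn ℝ 2 α U) (hβ : ContDiffOn ℝ 2 β U)
    (heqα : ∀ x ∈ U, ∀ i j : Fin n,
      pd (fun y => pd α j y) i x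
        = pd α i x * pd α j x
          - (1 / 2) * (∑ k, ∑ l, ω⁻¹ k l * pd α k x * pd α l x) * ω i j)
    (heqβ : ∀ x ∈ U, ∀ i j : Fin n,
      pd (fun y => pd β j y) i x
        = pd β i x * pd β j x
          - (1 / 2) * (∑ k, ∑ l, ω⁻¹ k l * pd β k x * pd β l x) * ω i j)
    (h0 : α x₀ = β x₀) (h1 : ∀ i : Fin n, pd α i x₀ = pd β i x₀) :
    Set.EqOn α β U := by
  have hjet := eqOn_of_hasFDerivAt_of_contDiff (contDiff_cSystemField ω) hU hconn.isPreconnected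
    (fun x hx => hasFDerivAt_jet_of_cSystem hU hα heqα hx)
    (fun x hx => hasFDerivAt_jet_of_cSystem hU hβ heqβ hx) hx₀ (Prod.ext h0 (funext h1))
  exact fun x hx => congrArg Prod.fst (hjet hx)
end

section
/- Let ω be a constant invertible symmetric n×n real matrix with inverse entries ω^{kl}, let α, β be C^∞ solutions of the flat c-system ∂_i∂_j u = ∂_iu ∂_ju − ½ (Σ_{k,l} ω^{kl} ∂_ku ∂_lu) ω_{ij} on an open set U ∋ x₀. If α(x₀) = β(x₀) and ∂_iα(x₀) = ∂_iβ(x₀) for all i, then all higher derivatives agree at x₀: for every m ≥ 0, the m-th iterated (Fréchet) derivative of α at x₀ equals that of β at x₀. -/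
open Matrix

open Filter Topology

section Jets

variable {E F G : Type*} [NormedAddCommGroup E] [NormedSpace ℝ E]
  [NormedAddCommGroup F] [NormedSpace ℝ F] [NormedAddCommGroup G] [NormedSpace ℝ G]

/-- The `m`-jet of `g ∘ f` at a point depends on `f` only through its `m`-jet. -/
theorem iteratedFDeriv_comp_congr_jet {g : F → G} {f₁ f₂ : E → F} {x : E} {m : ℕ}
    (hg : ContDiff ℝ m g) (hf₁ : ContDiffAt ℝ m f₁ x) (hf₂ : ContDiffAt ℝ m f₂ x)
    (h : ∀ k ≤ m, iteratedFDeriv ℝ k f₁ x = iteratedFDeriv ℝ k f₂ x) :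
    iteratedFDeriv ℝ m (g ∘ f₁) x = iteratedFDeriv ℝ m (g ∘ f₂) x := by
  have hx : f₁ x = f₂ x := by
    simpa using congrArg (fun p => p 0) (h 0 (Nat.zero_le m))
  rw [iteratedFDeriv_comp hg.contDiffAt hf₁ le_rfl, iteratedFDeriv_comp hg.contDiffAt hf₂ le_rfl,
    hx]
  refine Finset.sum_congr rfl fun c _ => ?_
  exact congrArg (c.compAlongOrderedFinpartition _) (funext fun i => h _ (c.partSize_le i))

theorem iteratedFDeriv_succ_congr {f₁ f₂ : E → F} {x : E} {m : ℕ}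
    (h : iteratedFDeriv ℝ m (fderiv ℝ f₁) x = iteratedFDeriv ℝ m (fderiv ℝ f₂) x) :
    iteratedFDeriv ℝ (m + 1) f₁ x = iteratedFDeriv ℝ (m + 1) f₂ x := by
  rw [iteratedFDeriv_succ_eq_comp_right, iteratedFDeriv_succ_eq_comp_right]
  exact congrArg _ h

/-- Two smooth solutions of the total differential system `Df = Q ∘ f` with the same value at a
point have the same derivatives of every order there. -/
theorem iteratedFDeriv_eq_of_fderiv_eq_comp {Q : F → E →L[ℝ] F} (hQ : ContDiff ℝ (⊤ : ℕ∞) Q)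
    {f₁ f₂ : E → F} {x : E}
    (hf₁ : ContDiffAt ℝ (⊤ : ℕ∞) f₁ x) (hf₂ : ContDiffAt ℝ (⊤ : ℕ∞) f₂ x)
    (h₁ : fderiv ℝ f₁ =ᶠ[𝓝 x] Q ∘ f₁) (h₂ : fderiv ℝ f₂ =ᶠ[𝓝 x] Q ∘ f₂)
    (h : f₁ x = f₂ x) (m : ℕ) :
    iteratedFDeriv ℝ m f₁ x = iteratedFDeriv ℝ m f₂ x := by
  induction m using Nat.strong_induction_on with
  | _ m ih =>
    cases m with
    | zero => ext v; simpa using h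
    | succ m =>
      have hm : (m : WithTop ℕ∞) ≤ ((⊤ : ℕ∞) : WithTop ℕ∞) := by exact_mod_cast le_top
      apply iteratedFDeriv_succ_congr
      rw [(h₁.iteratedFDeriv ℝ m).eq_of_nhds, (h₂.iteratedFDeriv ℝ m).eq_of_nhds]
      exact iteratedFDeriv_comp_congr_jet (hQ.of_le hm) (hf₁.of_le hm) (hf₂.of_le hm)
        fun k hk => ih k (Nat.lt_succ_of_le hk)

end Jets

/-- The right-hand side of the flat c-system as a bilinear form depending on the differential
`p` of the unknown function. -/
noncomputable def cSystemRHS {n : ℕ} (ω : Matrix (Fin n) (Fin n) ℝ) (p : (Fin n → ℝ) →L[ℝ] ℝ) :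
    (Fin n → ℝ) →L[ℝ] (Fin n → ℝ) →L[ℝ] ℝ :=
  ∑ i, ∑ j, (p (Pi.single i 1) * p (Pi.single j 1)
      - (1 / 2) * (∑ k, ∑ l, ω⁻¹ k l * p (Pi.single k 1) * p (Pi.single l 1)) * ω i j) •
    (ContinuousLinearMap.proj (R := ℝ) (φ := fun _ : Fin n => ℝ) i).smulRight
      (ContinuousLinearMap.proj (R := ℝ) (φ := fun _ : Fin n => ℝ) j)

theorem contDiff_cSystemRHS {n : ℕ} (ω : Matrix (Fin n) (Fin n) ℝ) {m : WithTop ℕ∞} :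
    ContDiff ℝ m (cSystemRHS ω) := by
  have hcoeff : ∀ i j : Fin n, ContDiff ℝ m fun p : (Fin n → ℝ) →L[ℝ] ℝ =>
      p (Pi.single i 1) * p (Pi.single j 1)
        - (1 / 2) * (∑ k, ∑ l, ω⁻¹ k l * p (Pi.single k 1) * p (Pi.single l 1)) * ω i j := by
    fun_prop
  exact ContDiff.sum fun i _ => ContDiff.sum fun j _ =>
    (ContinuousLinearMap.toSpanSingleton ℝ _).contDiff.comp (hcoeff i j)

theorem cSystemRHS_single_single {n : ℕ} (ω : Matrix (Fin n) (Fin n) ℝ)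
    (p : (Fin n → ℝ) →L[ℝ] ℝ) (i j : Fin n) :
    cSystemRHS ω p (Pi.single i 1) (Pi.single j 1) =
      p (Pi.single i 1) * p (Pi.single j 1)
        - (1 / 2) * (∑ k, ∑ l, ω⁻¹ k l * p (Pi.single k 1) * p (Pi.single l 1)) * ω i j := by
  simp [cSystemRHS, Pi.single_apply]

theorem clm_pi_ext {n : ℕ} {F : Type*} [NormedAddCommGroup F] [NormedSpace ℝ F]
    {f g : (Fin n → ℝ) →L[ℝ] F} (h : ∀ i, f (Pi.single i 1) = g (Pi.single i 1)) : f = g :=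
  ContinuousLinearMap.coe_injective ((Pi.basisFun ℝ (Fin n)).ext fun i => by simpa using h i)

/-- A smooth solution of the flat c-system has differential solving a total differential system. -/
theorem fderiv_fderiv_eq_cSystemRHS {n : ℕ} {ω : Matrix (Fin n) (Fin n) ℝ}
    {u : (Fin n → ℝ) → ℝ} {x : Fin n → ℝ} (hu : DifferentiableAt ℝ (fderiv ℝ u) x)
    (heq : ∀ i j : Fin n, pd (fun y => pd u j y) i x = pd u i x * pd u j x
      - (1 / 2) * (∑ k, ∑ l, ω⁻¹ k l * pd u k x * pd u l x) * ω i j) :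
    fderiv ℝ (fderiv ℝ u) x = cSystemRHS ω (fderiv ℝ u x) := by
  refine clm_pi_ext fun i => clm_pi_ext fun j => ?_
  rw [cSystemRHS_single_single]
  refine Eq.trans ?_ (heq i j)
  simp only [pd]
  rw [fderiv_clm_apply hu (differentiableAt_const _)]
  simp

/-- two C^∞ solutions of the flat c-system with the same 1-jet at `x₀` have all
their iterated (Fréchet) derivatives equal at `x₀`. -/
theorem stmt_9 (n : ℕ) (ω : Matrix (Fin n) (Fin n) ℝ)
    (hinv : IsUnit ω.det) (hsym : ω.IsSymm)
    (U : Set (Fin n → ℝ)) (hU : IsOpen U)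
    (x₀ : Fin n → ℝ) (hx₀ : x₀ ∈ U)
    (α β : (Fin n → ℝ) → ℝ)
    (hα : ContDiffOn ℝ (⊤ : ℕ∞) α U) (hβ : ContDiffOn ℝ (⊤ : ℕ∞) β U)
    (heqα : ∀ x ∈ U, ∀ i j : Fin n,
      pd (fun y => pd α j y) i x
        = pd α i x * pd α j x
          - (1 / 2) * (∑ k, ∑ l, ω⁻¹ k l * pd α k x * pd α l x) * ω i j)
    (heqβ : ∀ x ∈ U, ∀ i j : Fin n,
      pd (fun y => pd β j y) i x
        = pd β i x * pd β j x
          - (1 / 2) * (∑ k, ∑ l, ω⁻¹ k l * pd β k x * pd β l x) * ω i j)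
    (h0 : α x₀ = β x₀) (h1 : ∀ i : Fin n, pd α i x₀ = pd β i x₀) :
    ∀ m : ℕ, iteratedFDeriv ℝ m α x₀ = iteratedFDeriv ℝ m β x₀ := by
  have hnhds : U ∈ 𝓝 x₀ := hU.mem_nhds hx₀
  have smooth_fderiv : ∀ u : (Fin n → ℝ) → ℝ, ContDiffOn ℝ (⊤ : ℕ∞) u U → ∀ x ∈ U,
      ContDiffAt ℝ (⊤ : ℕ∞) (fderiv ℝ u) x := fun u hu x hx =>
    (hu.contDiffAt (hU.mem_nhds hx)).fderiv_right (by simp)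
  have differential_system : ∀ u : (Fin n → ℝ) → ℝ, ContDiffOn ℝ (⊤ : ℕ∞) u U →
      (∀ x ∈ U, ∀ i j : Fin n, pd (fun y => pd u j y) i x = pd u i x * pd u j x
        - (1 / 2) * (∑ k, ∑ l, ω⁻¹ k l * pd u k x * pd u l x) * ω i j) →
      fderiv ℝ (fderiv ℝ u) =ᶠ[𝓝 x₀] cSystemRHS ω ∘ fderiv ℝ u := fun u hu heq => by
    filter_upwards [hnhds] with x hx
    exact fderiv_fderiv_eq_cSystemRHS
      ((smooth_fderiv u hu x hx).differentiableAt (by simp)) (heq x hx)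
  intro m
  cases m with
  | zero => ext v; simpa using h0
  | succ m =>
    exact iteratedFDeriv_succ_congr <| iteratedFDeriv_eq_of_fderiv_eq_comp
      (contDiff_cSystemRHS ω) (smooth_fderiv α hα x₀ hx₀) (smooth_fderiv β hβ x₀ hx₀)
      (differential_system α hα heqα) (differential_system β hβ heqβ) (clm_pi_ext h1) m
end

section
/- Let ω be a constant invertible symmetric n×n real matrix with inverse entries ω^{kl}, U ⊆ ℝⁿ open, and α: U → ℝ a C² solution of the flat c-system ∂_i∂_j α = ∂_iα ∂_jα − ½ (Σ_{k,l} ω^{kl} ∂_kα ∂_lα) ω_{ij} on U. Let g := e^{2α} ω, Γ^k_{ij} := ½ Σ_l (g⁻¹)^{kl} (∂_i g_{jl} + ∂_j g_{il} − ∂_l g_{ij}), and Ric_{ij} := Σ_k ∂_kΓ^k_{ij} − Σ_k ∂_iΓ^k_{kj} + Σ_{k,l} (Γ^k_{kl} Γ^l_{ij} − Γ^k_{il} Γ^l_{kj}). Then Ric_{ij} = 0 on U for all i,j. -/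
open Matrix

/-- The Christoffel symbols of `e^{2α} ω` in terms of the gradient `a` of `α`, its `ω`-dual `A`,
and the constant metric `ω`. -/
def conformalChristoffel {n : ℕ} (ω : Matrix (Fin n) (Fin n) ℝ) (a A : Fin n → ℝ)
    (k i j : Fin n) : ℝ :=
  a i * (if k = j then 1 else 0) + a j * (if k = i then 1 else 0) - A k * ω i j

section Algebra

variable {n : ℕ} {ω : Matrix (Fin n) (Fin n) ℝ} {a A : Fin n → ℝ}

theorem sum_conformalChristoffel_contract (hA : ∀ j, ∑ k, A k * ω k j = a j) (l : Fin n) :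
    ∑ k, conformalChristoffel ω a A k k l = n * a l := by
  simp [conformalChristoffel, Finset.sum_add_distrib, Finset.sum_sub_distrib, hA]

theorem sum_conformalChristoffel_trace_mul (hA : ∀ j, ∑ k, A k * ω k j = a j) (i j : Fin n) :
    ∑ k, ∑ l, conformalChristoffel ω a A k k l * conformalChristoffel ω a A l i j
      = n * (2 * a i * a j - (∑ k, A k * a k) * ω i j) := by
  rw [Finset.sum_comm]
  simp_rw [← Finset.sum_mul, sum_conformalChristoffel_contract hA]
  have h : ∀ l, n * a l * conformalChristoffel ω a A l i j
      = (n * a i) * (a l * (if l = j then 1 else 0)) + (n * a j) * (a l * (if l = i then 1 else 0))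
        - (n * ω i j) * (A l * a l) := fun l => by
    unfold conformalChristoffel; ring
  simp_rw [h, Finset.sum_sub_distrib, Finset.sum_add_distrib, ← Finset.mul_sum]
  simp only [mul_ite, mul_one, mul_zero, Finset.sum_ite_eq', Finset.mem_univ, if_true]
  ring

theorem sum_conformalChristoffel_mul (hsym : ω.IsSymm) (hA : ∀ j, ∑ k, A k * ω k j = a j)
    (i j : Fin n) :
    ∑ k, ∑ l, conformalChristoffel ω a A k i l * conformalChristoffel ω a A l k j
      = (n + 2) * (a i * a j) - 2 * (∑ k, A k * a k) * ω i j := by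
  have hA' : ∀ i, ∑ k, A k * ω i k = a i := fun i => by
    simp_rw [← hA i, hsym.apply]
  have inner : ∀ k, ∑ l, conformalChristoffel ω a A k i l * conformalChristoffel ω a A l k j
      = a i * (a k * (if k = j then 1 else 0)) + a i * a j - a i * (A k * ω k j)
        + (a k * a j + a j * a k - (∑ l, A l * a l) * ω k j) * (if k = i then 1 else 0)
        - ω i j * (A k * a k) - a j * (A k * ω i k) + a i * (A k * ω k j) := fun k => by
    have h : ∀ l, conformalChristoffel ω a A k i l * conformalChristoffel ω a A l k j
        = (a i * a k * (if l = j then 1 else 0)) * (if k = l then 1 else 0)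
          + (a i * a j * (if l = k then 1 else 0)) * (if k = l then 1 else 0)
          - (a i * A l * ω k j) * (if k = l then 1 else 0)
          + ((a k * (if k = i then 1 else 0)) * (a l * (if l = j then 1 else 0))
          + (a j * (if k = i then 1 else 0)) * (a l * (if l = k then 1 else 0))
          - ((if k = i then 1 else 0) * ω k j) * (A l * a l))
          - (A k * a k) * (ω i l * (if l = j then 1 else 0))
          - (A k * a j) * (ω i l * (if l = k then 1 else 0))
          + (A k * ω k j) * (A l * ω i l) := fun l => by
      unfold conformalChristoffel; ring
    simp_rw [h, Finset.sum_add_distrib, Finset.sum_sub_distrib, Finset.sum_add_distrib,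
      Finset.sum_sub_distrib, Finset.sum_add_distrib, ← Finset.mul_sum, hA']
    simp only [mul_ite, mul_one, mul_zero, Finset.sum_ite_eq', Finset.sum_ite_eq,
      Finset.mem_univ, if_true]
    split_ifs <;> ring
  simp_rw [inner, Finset.sum_add_distrib, Finset.sum_sub_distrib, Finset.sum_add_distrib,
    Finset.sum_sub_distrib, Finset.sum_add_distrib, ← Finset.mul_sum, hA, hA']
  simp only [mul_ite, mul_one, mul_zero, Finset.sum_ite_eq', Finset.mem_univ, if_true,
    Finset.sum_const, Finset.card_univ, Fintype.card_fin, nsmul_eq_mul]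
  ring

end Algebra

section Calculus

variable {n : ℕ} {α : (Fin n → ℝ) → ℝ} {x : Fin n → ℝ}

theorem pd_exp_two_mul_mul_const (hα : DifferentiableAt ℝ α x) (c : ℝ) (i : Fin n) :
    pd (fun y => Real.exp (2 * α y) * c) i x = 2 * pd α i x * Real.exp (2 * α x) * c := by
  unfold pd
  rw [(((hα.hasFDerivAt.const_mul 2).exp).mul_const c).fderiv]
  simp only [_root_.smul_apply, smul_eq_mul]
  ring

theorem differentiableAt_pd {U : Set (Fin n → ℝ)} (hU : IsOpen U) (hα : ContDiffOn ℝ 2 α U)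
    (hx : x ∈ U) (i : Fin n) : DifferentiableAt ℝ (fun y => pd α i y) x := by
  have h : DifferentiableAt ℝ (fderiv ℝ α) x :=
    ((hα.contDiffAt (hU.mem_nhds hx)).fderiv_right (m := 1) (by norm_num)).differentiableAt
      (by norm_num)
  exact h.clm_apply (differentiableAt_const _)

theorem pd_conformalChristoffel {a A : (Fin n → ℝ) → Fin n → ℝ} (ω : Matrix (Fin n) (Fin n) ℝ)
    (ha : ∀ i, DifferentiableAt ℝ (fun y => a y i) x)
    (hA : ∀ i, DifferentiableAt ℝ (fun y => A y i) x) (k i j m : Fin n) :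
    pd (fun y => conformalChristoffel ω (a y) (A y) k i j) m x
      = conformalChristoffel ω (fun i => pd (fun y => a y i) m x)
          (fun i => pd (fun y => A y i) m x) k i j := by
  unfold pd conformalChristoffel
  rw [((((ha i).hasFDerivAt.mul_const _).fun_add ((ha j).hasFDerivAt.mul_const _)).fun_sub
    ((hA k).hasFDerivAt.mul_const _)).fderiv]
  simp only [_root_.smul_apply, _root_.add_apply,
    _root_.sub_apply, smul_eq_mul]
  ring

theorem pd_sum_const_mul {ι : Type*} [Fintype ι] (c : ι → ℝ) {f : ι → (Fin n → ℝ) → ℝ}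
    (hf : ∀ l, DifferentiableAt ℝ (f l) x) (m : Fin n) :
    pd (fun y => ∑ l, c l * f l y) m x = ∑ l, c l * pd (f l) m x := by
  unfold pd
  rw [(HasFDerivAt.fun_sum fun l _ => (hf l).hasFDerivAt.const_mul (c l)).fderiv]
  simp

end Calculus

theorem christoffel_conformal_eq {n : ℕ} {ω : Matrix (Fin n) (Fin n) ℝ}
    (hinv : IsUnit ω.det) (hsym : ω.IsSymm) {α : (Fin n → ℝ) → ℝ} {x : Fin n → ℝ}
    (hα : DifferentiableAt ℝ α x) (k i j : Fin n) :
    (1 / 2) * ∑ l, (Real.exp (2 * α x) • ω)⁻¹ k l *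
      (pd (fun y => (Real.exp (2 * α y) • ω) j l) i x
        + pd (fun y => (Real.exp (2 * α y) • ω) i l) j x
        - pd (fun y => (Real.exp (2 * α y) • ω) i j) l x)
      = conformalChristoffel ω (fun i => pd α i x) (fun k => ∑ l, ω⁻¹ k l * pd α l x) k i j := by
  have he : Real.exp (2 * α x) ≠ 0 := (Real.exp_pos _).ne'
  have hsmul : (Real.exp (2 * α x) • ω)⁻¹ = (Real.exp (2 * α x))⁻¹ • ω⁻¹ := by
    apply Matrix.inv_eq_right_inv
    rw [Matrix.smul_mul, Matrix.mul_smul, smul_smul, mul_inv_cancel₀ he, one_smul,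
      Matrix.mul_nonsing_inv _ hinv]
  have hδ : ∀ j, ∑ l, ω⁻¹ k l * ω j l = if k = j then 1 else 0 := fun j => by
    have h := congrFun (congrFun (Matrix.nonsing_inv_mul ω hinv) k) j
    rw [Matrix.mul_apply, Matrix.one_apply] at h
    rw [← h]
    exact Finset.sum_congr rfl fun l _ => by rw [hsym.apply]
  rw [hsmul]
  simp only [Matrix.smul_apply, smul_eq_mul, pd_exp_two_mul_mul_const hα]
  unfold conformalChristoffel
  rw [← hδ i, ← hδ j, Finset.mul_sum, Finset.mul_sum, Finset.mul_sum, Finset.sum_mul,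
    ← Finset.sum_add_distrib, ← Finset.sum_sub_distrib]
  refine Finset.sum_congr rfl fun l _ => ?_
  field_simp

/-- if `α` solves the flat c-system, then the conformally rescaled metric
`g = e^{2α} ω` is Ricci-flat: `Ric_{ij} = 0` on `U`. -/
theorem stmt_17 (n : ℕ) (ω : Matrix (Fin n) (Fin n) ℝ)
    (hinv : IsUnit ω.det) (hsym : ω.IsSymm)
    (U : Set (Fin n → ℝ)) (hU : IsOpen U)
    (α : (Fin n → ℝ) → ℝ) (hα : ContDiffOn ℝ 2 α U)
    (heqα : ∀ x ∈ U, ∀ i j : Fin n,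
      pd (fun y => pd α j y) i x
        = pd α i x * pd α j x
          - (1 / 2) * (∑ k, ∑ l, ω⁻¹ k l * pd α k x * pd α l x) * ω i j)
    (g : (Fin n → ℝ) → Matrix (Fin n) (Fin n) ℝ)
    (hg : ∀ x, g x = Real.exp (2 * α x) • ω)
    (Γ : Fin n → Fin n → Fin n → (Fin n → ℝ) → ℝ)
    (hΓ : ∀ k i j x, Γ k i j x = (1 / 2) * ∑ l, (g x)⁻¹ k l *
      (pd (fun y => g y j l) i x + pd (fun y => g y i l) j x - pd (fun y => g y i j) l x))
    (Ric : Fin n → Fin n → (Fin n → ℝ) → ℝ)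
    (hRic : ∀ i j x, Ric i j x
      = ∑ k, pd (Γ k i j) k x - ∑ k, pd (Γ k k j) i x
        + ∑ k, ∑ l, (Γ k k l x * Γ l i j x - Γ k i l x * Γ l k j x)) :
    ∀ x ∈ U, ∀ i j : Fin n, Ric i j x = 0 := by
  intro x hx i j
  set a : (Fin n → ℝ) → Fin n → ℝ := fun y i => pd α i y with ha
  set A : (Fin n → ℝ) → Fin n → ℝ := fun y k => ∑ l, ω⁻¹ k l * pd α l y with hAdef
  have hΓU : ∀ y ∈ U, ∀ k i j, Γ k i j y = conformalChristoffel ω (a y) (A y) k i j := by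
    intro y hy k i j
    rw [hΓ]
    simp only [hg]
    exact christoffel_conformal_eq hinv hsym
      ((hα.contDiffAt (hU.mem_nhds hy)).differentiableAt (by norm_num)) k i j
  have hda : ∀ i, DifferentiableAt ℝ (fun y => a y i) x := differentiableAt_pd hU hα hx
  have hdA : ∀ i, DifferentiableAt ℝ (fun y => A y i) x := fun k =>
    DifferentiableAt.fun_sum fun l _ => (hda l).const_mul _
  have hpdΓ : ∀ k i j m, pd (Γ k i j) m x
      = conformalChristoffel ω (fun i => pd (fun y => a y i) m x)
          (fun i => pd (fun y => A y i) m x) k i j := by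
    intro k i j m
    rw [← pd_conformalChristoffel ω hda hdA]
    unfold pd
    rw [Filter.EventuallyEq.fderiv_eq
      (Filter.eventually_of_mem (hU.mem_nhds hx) fun y hy => hΓU y hy k i j)]
  have hinv_sym : ∀ k l, ω⁻¹ k l = ω⁻¹ l k := fun k l => by
    have h : (ω⁻¹)ᵀ = ω⁻¹ := by rw [Matrix.transpose_nonsing_inv, hsym.eq]
    exact congrFun (congrFun h l) k
  have hmul : ∀ k l, ∑ m, ω⁻¹ k m * ω m l = if k = l then 1 else 0 := fun k l => by
    rw [← Matrix.mul_apply, Matrix.nonsing_inv_mul _ hinv, Matrix.one_apply]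
  have lower : ∀ v : Fin n → ℝ, ∀ j, ∑ k, (∑ l, ω⁻¹ k l * v l) * ω k j = v j := by
    intro v j
    simp_rw [Finset.sum_mul]
    rw [Finset.sum_comm]
    have h : ∀ l, ∑ k, ω⁻¹ k l * v l * ω k j = v l * (if l = j then 1 else 0) := fun l => by
      rw [← hmul l j, Finset.mul_sum]
      exact Finset.sum_congr rfl fun k _ => by rw [hinv_sym k l]; ring
    simp [h]
  have hA : ∀ j, ∑ k, A x k * ω k j = a x j := lower (a x)
  have hpdA : ∀ k m, pd (fun y => A y k) m x = ∑ l, ω⁻¹ k l * pd (fun y => a y l) m x :=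
    fun k m => pd_sum_const_mul _ hda m
  set s : ℝ := ∑ k, A x k * a x k with hs
  have hH : ∀ i j, pd (fun y => a y j) i x = a x i * a x j - (1 / 2) * s * ω i j := by
    intro i j
    have hs' : s = ∑ k, ∑ l, ω⁻¹ k l * pd α k x * pd α l x := by
      simp_rw [hs, hAdef, ha, Finset.sum_mul]
      exact Finset.sum_congr rfl fun k _ => Finset.sum_congr rfl fun l _ => by ring
    rw [hs']
    exact heqα x hx i j
  have hdiag : ∀ k, pd (fun y => A y k) k x = A x k * a x k - (1 / 2) * s := by
    intro k
    have h : ∀ l, ω⁻¹ k l * pd (fun y => a y l) k x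
        = a x k * (ω⁻¹ k l * a x l) - (1 / 2) * s * (ω⁻¹ k l * ω l k) := fun l => by
      rw [hH, hsym.apply]; ring
    rw [hpdA]
    simp_rw [h, Finset.sum_sub_distrib, ← Finset.mul_sum, hmul]
    simp only [if_true, hAdef, ha]
    ring
  have hdiv : ∑ k, pd (Γ k i j) k x
      = 2 * (a x i * a x j - (1 / 2) * s * ω i j) - (s - n * ((1 / 2) * s)) * ω i j := by
    simp_rw [hpdΓ]
    unfold conformalChristoffel
    simp_rw [hdiag, Finset.sum_sub_distrib, Finset.sum_add_distrib, ← Finset.sum_mul,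
      Finset.sum_sub_distrib, ← hs, hH]
    simp only [mul_ite, mul_one, mul_zero, Finset.sum_ite_eq', Finset.mem_univ, if_true,
      Finset.sum_const, Finset.card_univ, Fintype.card_fin, nsmul_eq_mul]
    rw [hsym.apply i j]
    ring
  have htr : ∑ k, pd (Γ k k j) i x = n * (a x i * a x j - (1 / 2) * s * ω i j) := by
    simp_rw [hpdΓ]
    rw [sum_conformalChristoffel_contract (fun j => by simp_rw [hpdA]; exact lower _ j), hH]
  rw [hRic, hdiv, htr]
  simp_rw [hΓU x hx, Finset.sum_sub_distrib]
  rw [sum_conformalChristoffel_trace_mul hA, sum_conformalChristoffel_mul hsym hA, ← hs]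
  ring
end
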